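/- arXiv:2008.07236 — 3 statements merged into one kernel-verified Lean document; each statement's English description precedes it below -/
import Mathlib

section
/- Let 0 < R < 1 and let (C_n) be a sequence of doubly transitive binary linear codes, where C_n has length n (n ranging over an infinite set of positive integers), such that the rates R(C_n) converge to R. Then μ_{C_n}(R) = o(n), i.e., μ_{C_n}(R)/n → 0 as n → ∞. -/
/-!
Let `G(p)` be the probability that a coordinate `i` is determined by the coordinates in a `p`-random
set `S ⊆ {1, ..., n} \ {i}`; by transitivity it does not depend on `i`. The Margulis–Russo formula
(`hasDerivAt_bexp`) gives `μ_C' = n G`, and `G'` is the total influence of the monotone Boolean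
function indicating that `S` determines `i`. Since `μ_C(0) = 0` and `μ_C(1) = n (1 - R(C))`, the theorem
follows once `G` jumps from near `0` to near `1` in a window of width `o(1)`: the jump must then
occur near `p = R(C)`, so that `G` has integral `o(1)` on `[0, R]` (`threshold_bound`).

The sharp threshold comes from the Falik–Samorodnitsky form of the KKL theorem (`variance_le`): a
function on the biased cube with bounded total influence and uniformly small influences has small
variance. By double transitivity the `n - 1` influences of the function above are all equal, so if
`G'` is bounded they are `O(1 / n)`, and `G (1 - G)` is small (`steep_bound`). The variance bound is
proved from a logarithmic Sobolev inequality on the biased cube (`logSobolev`), whose constant does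
not depend on `p`.
-/

open Finset Filter

/-- The rate of a binary linear code. -/
noncomputable def codeRate {ι : Type} [Fintype ι] (C : Submodule (ZMod 2) (ι → ZMod 2)) : ℝ :=
  (Module.finrank (ZMod 2) C : ℝ) / (Fintype.card ι : ℝ)

/-- `weightEnum C i` is the number of codewords of Hamming weight `i`. -/
noncomputable def weightEnum {ι : Type} [Fintype ι] (C : Submodule (ZMod 2) (ι → ZMod 2))
    (i : ℕ) : ℕ :=
  Nat.card {x : ι → ZMod 2 // x ∈ C ∧ hammingNorm x = i}

/-- The permutation `π` of coordinates maps the code `C` onto itself. -/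
def PreservesCode {ι : Type} [Fintype ι] (C : Submodule (ZMod 2) (ι → ZMod 2))
    (π : Equiv.Perm ι) : Prop :=
  ∀ x : ι → ZMod 2, x ∈ C ↔ x ∘ π ∈ C

/-- The automorphism group of `C` acts 2-transitively on coordinates. -/
def DoublyTransitive {ι : Type} [Fintype ι] (C : Submodule (ZMod 2) (ι → ZMod 2)) : Prop :=
  ∀ i₁ j₁ i₂ j₂ : ι, i₁ ≠ j₁ → i₂ ≠ j₂ →
    ∃ π : Equiv.Perm ι, PreservesCode C π ∧ π i₁ = i₂ ∧ π j₁ = j₂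

/-- Minimal distance: the least Hamming weight of a nonzero codeword. -/
noncomputable def minDist {ι : Type} [Fintype ι] (C : Submodule (ZMod 2) (ι → ZMod 2)) : ℕ :=
  sInf {d | ∃ x ∈ C, x ≠ 0 ∧ hammingNorm x = d}

/-- Reed-Muller code RM(m,d). -/
noncomputable def ReedMuller (m d : ℕ) : Submodule (ZMod 2) ((Fin m → ZMod 2) → ZMod 2) :=
  Submodule.map
    (LinearMap.pi fun v : Fin m → ZMod 2 => (MvPolynomial.aeval v).toLinearMap)
    (MvPolynomial.restrictTotalDegree (Fin m) (ZMod 2) d)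

open scoped Classical in
/-- ML block error probability on BSC(p). -/
noncomputable def Perr {ι : Type} [Fintype ι] (C : Submodule (ZMod 2) (ι → ZMod 2)) (p : ℝ) : ℝ :=
  ∑ z : ι → ZMod 2,
    if ∃ x ∈ C, x ≠ 0 ∧ hammingNorm (z + x) ≤ hammingNorm z then
      p ^ hammingNorm z * (1 - p) ^ (Fintype.card ι - hammingNorm z) else 0

/-- Rank of the projection of `C` to the coordinates in `S`. -/
noncomputable def rankC {ι : Type} [Fintype ι] (C : Submodule (ZMod 2) (ι → ZMod 2))
    (S : Finset ι) : ℕ :=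
  Module.finrank (ZMod 2)
    (C.map (LinearMap.funLeft (ZMod 2) (ZMod 2) (Subtype.val : {i // i ∈ S} → ι)))

/-- `f_C(S) = |S| - r_C(S)`. -/
noncomputable def fC {ι : Type} [Fintype ι] (C : Submodule (ZMod 2) (ι → ZMod 2))
    (S : Finset ι) : ℝ :=
  (S.card : ℝ) - (rankC C S : ℝ)

/-- `μ_C(λ) = E_{S ~ λ} f_C(S)`. -/
noncomputable def muC {ι : Type} [Fintype ι] (C : Submodule (ZMod 2) (ι → ZMod 2)) (l : ℝ) : ℝ :=
  ∑ S : Finset ι, l ^ S.card * (1 - l) ^ (Fintype.card ι - S.card) * fC C S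

/-- Bit erasure probability `P_{b,i}(p)`. -/
noncomputable def Pbi {ι : Type} [Fintype ι] [DecidableEq ι]
    (C : Submodule (ZMod 2) (ι → ZMod 2)) (i : ι) (p : ℝ) : ℝ :=
  ∑ R ∈ ((Finset.univ : Finset ι).erase i).powerset,
    (1 - p) ^ R.card * p ^ (Fintype.card ι - R.card) *
      (if rankC C R < rankC C (insert i R) then (1 : ℝ) else 0)

/-- The average EXIT function `h(p)`. -/
noncomputable def exitAvg {ι : Type} [Fintype ι] [DecidableEq ι]
    (C : Submodule (ZMod 2) (ι → ZMod 2)) (p : ℝ) : ℝ :=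
  (1 / (Fintype.card ι : ℝ)) * ∑ i : ι, Pbi C i p / p

/-- The dual code. -/
def dualCode {ι : Type} [Fintype ι] (C : Submodule (ZMod 2) (ι → ZMod 2)) :
    Submodule (ZMod 2) (ι → ZMod 2) where
  carrier := {y | ∀ x ∈ C, ∑ i, x i * y i = 0}
  zero_mem' := by intro x hx; simp
  add_mem' := by
    intro y z hy hz x hx
    simp only [Pi.add_apply, mul_add, Finset.sum_add_distrib, Set.mem_setOf_eq] at *
    rw [hy x hx, hz x hx, add_zero]
  smul_mem' := by
    intro c y hy x hx
    simp only [Pi.smul_apply, smul_eq_mul]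
    rw [show (∑ i, x i * (c * y i)) = c * ∑ i, x i * y i by rw [Finset.mul_sum]; congr 1; funext i; ring, hy x hx, mul_zero]

section

variable {ι : Type}

/-! ### The `p`-biased cube -/

/-- The `p`-biased expectation of `f` over the subsets of `s`: each element of `s` is kept
independently with probability `p`. The function `f` is defined on all finsets, so the coordinates
outside `s` can be frozen; inductions on `s` exploit this. -/
noncomputable def bexp (p : ℝ) (s : Finset ι) (f : Finset ι → ℝ) : ℝ :=
  ∑ S ∈ s.powerset, p ^ S.card * (1 - p) ^ (s.card - S.card) * f S

/-- The discrete derivative of `f` in the direction of the coordinate `i`. Its value at `S` does not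
depend on whether `i ∈ S`. -/
def ddiff [DecidableEq ι] (i : ι) (f : Finset ι → ℝ) : Finset ι → ℝ :=
  fun S => f (insert i S) - f (S.erase i)

theorem bexp_congr {p : ℝ} {s : Finset ι} {f g : Finset ι → ℝ} (h : ∀ S ⊆ s, f S = g S) :
    bexp p s f = bexp p s g :=
  Finset.sum_congr rfl fun S hS => by rw [h S (Finset.mem_powerset.1 hS)]

theorem bexp_mono {p : ℝ} (hp0 : 0 ≤ p) (hp1 : p ≤ 1) {s : Finset ι} {f g : Finset ι → ℝ}
    (h : ∀ S ⊆ s, f S ≤ g S) : bexp p s f ≤ bexp p s g :=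
  Finset.sum_le_sum fun S hS => mul_le_mul_of_nonneg_left (h S (Finset.mem_powerset.1 hS))
    (mul_nonneg (pow_nonneg hp0 _) (pow_nonneg (sub_nonneg.2 hp1) _))

theorem bexp_lin (p : ℝ) (s : Finset ι) (a b : ℝ) (f g : Finset ι → ℝ) :
    bexp p s (fun S => a * f S + b * g S) = a * bexp p s f + b * bexp p s g := by
  simp only [bexp, Finset.mul_sum, ← Finset.sum_add_distrib]
  exact Finset.sum_congr rfl fun S _ => by ring

theorem bexp_zero (p : ℝ) (s : Finset ι) : bexp p s (fun _ => 0) = 0 := by simp [bexp]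

theorem bexp_nonneg {p : ℝ} (hp0 : 0 ≤ p) (hp1 : p ≤ 1) {s : Finset ι} {f : Finset ι → ℝ}
    (h : ∀ S ⊆ s, 0 ≤ f S) : 0 ≤ bexp p s f := by
  rw [← bexp_zero p s]; exact bexp_mono hp0 hp1 h

theorem bexp_empty (p : ℝ) (f : Finset ι → ℝ) : bexp p ∅ f = f ∅ := by simp [bexp]

/-- Conditioning on the coordinate `i`. -/
theorem bexp_insert [DecidableEq ι] (p : ℝ) {s : Finset ι} {i : ι} (hi : i ∉ s)
    (f : Finset ι → ℝ) :
    bexp p (insert i s) f = (1 - p) * bexp p s f + p * bexp p s (fun S => f (insert i S)) := by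
  simp only [bexp, Finset.sum_powerset_insert hi, Finset.mul_sum]
  congr 1
  · refine Finset.sum_congr rfl fun S hS => ?_
    have h1 := Finset.card_le_card (Finset.mem_powerset.1 hS)
    rw [Finset.card_insert_of_notMem hi, Nat.succ_sub h1, pow_succ]
    ring
  · refine Finset.sum_congr rfl fun S hS => ?_
    have h2 : i ∉ S := fun h => hi (Finset.mem_powerset.1 hS h)
    rw [Finset.card_insert_of_notMem hi, Finset.card_insert_of_notMem h2, Nat.add_sub_add_right,
      pow_succ]
    ring

theorem bexp_const (p : ℝ) (s : Finset ι) (c : ℝ) : bexp p s (fun _ => c) = c := by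
  classical
  induction s using Finset.induction_on with
  | empty => simp [bexp_empty]
  | insert i s hi ih => rw [bexp_insert p hi, ih]; ring

theorem bexp_cauchy {p : ℝ} (hp0 : 0 ≤ p) (hp1 : p ≤ 1) (s : Finset ι) (f g : Finset ι → ℝ) :
    bexp p s (fun S => f S * g S) ^ 2 ≤
      bexp p s (fun S => f S ^ 2) * bexp p s (fun S => g S ^ 2) := by
  have hw : ∀ S : Finset ι, 0 ≤ p ^ S.card * (1 - p) ^ (s.card - S.card) := fun S =>
    mul_nonneg (pow_nonneg hp0 _) (pow_nonneg (sub_nonneg.2 hp1) _)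
  refine Finset.sum_sq_le_sum_mul_sum_of_sq_le_mul _ (fun S _ => mul_nonneg (hw S) (sq_nonneg _))
    (fun S _ => mul_nonneg (hw S) (sq_nonneg _)) (fun S _ => le_of_eq (by ring))

theorem ddiff_notMem [DecidableEq ι] {i : ι} {S : Finset ι} (f : Finset ι → ℝ) (h : i ∉ S) :
    ddiff i f S = f (insert i S) - f S := by
  simp [ddiff, Finset.erase_eq_of_notMem h]

theorem ddiff_insert_self [DecidableEq ι] {i : ι} {S : Finset ι} (f : Finset ι → ℝ) (h : i ∉ S) :
    ddiff i f (insert i S) = f (insert i S) - f S := by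
  simp [ddiff, Finset.erase_insert h]

theorem ddiff_insert [DecidableEq ι] {i j : ι} (f : Finset ι → ℝ) (h : i ≠ j) (S : Finset ι) :
    ddiff j f (insert i S) = ddiff j (fun S => f (insert i S)) S := by
  simp [ddiff, Finset.insert_comm i j, Finset.erase_insert_of_ne h]

/-! ### Logarithmic Sobolev inequality and the variance bound -/

/-- The logarithmic Sobolev inequality on a two-point space, with a constant uniform in `p`. With
`m` the mean of the squares, `log x ≤ log m + (x / m - 1)` bounds the entropy of the squares by
their variance divided by `m`. -/
theorem two_point_logSobolev {p : ℝ} (a b : ℝ) (hp0 : 0 ≤ p) (hp1 : p ≤ 1) :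
    (1 - p) * (a ^ 2 * Real.log (a ^ 2)) + p * (b ^ 2 * Real.log (b ^ 2)) ≤
      ((1 - p) * a ^ 2 + p * b ^ 2) * Real.log ((1 - p) * a ^ 2 + p * b ^ 2)
        + 2 * (a - b) ^ 2 := by
  set m := (1 - p) * a ^ 2 + p * b ^ 2 with hm
  have hq : 0 ≤ 1 - p := sub_nonneg.2 hp1
  have hm0 : 0 ≤ m := by positivity
  rcases hm0.eq_or_lt with h0 | hmpos
  · have h1 : (1 - p) * a ^ 2 = 0 := by nlinarith [mul_nonneg hq (sq_nonneg a), mul_nonneg hp0 (sq_nonneg b)]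
    have h2 : p * b ^ 2 = 0 := by nlinarith [mul_nonneg hq (sq_nonneg a), mul_nonneg hp0 (sq_nonneg b)]
    rw [← h0, ← mul_assoc, ← mul_assoc, h1, h2]
    nlinarith [sq_nonneg (a - b)]
  · have key : ∀ x : ℝ, 0 ≤ x → x * Real.log x ≤ x * Real.log m + x * (x / m - 1) := by
      intro x hx
      rcases hx.eq_or_lt with h | h
      · simp [← h]
      · have := Real.log_le_sub_one_of_pos (div_pos h hmpos)
        rw [Real.log_div h.ne' hmpos.ne'] at this
        nlinarith
    have k1 := mul_le_mul_of_nonneg_left (key (a ^ 2) (sq_nonneg a)) hq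
    have k2 := mul_le_mul_of_nonneg_left (key (b ^ 2) (sq_nonneg b)) hp0
    have k3 : (1 - p) * (a ^ 2 * (a ^ 2 / m - 1)) + p * (b ^ 2 * (b ^ 2 / m - 1))
        ≤ 2 * (a - b) ^ 2 := by
      have e : (1 - p) * (a ^ 2 * (a ^ 2 / m - 1)) + p * (b ^ 2 * (b ^ 2 / m - 1))
          = (a - b) ^ 2 * (p * (1 - p) * (a + b) ^ 2) / m := by
        field_simp
        rw [hm]; ring
      rw [e, div_le_iff₀ hmpos]
      have : p * (1 - p) * (a + b) ^ 2 ≤ 2 * m := by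
        have e1 : p * (1 - p) * (a + b) ^ 2 ≤ p * (1 - p) * (2 * (a ^ 2 + b ^ 2)) :=
          mul_le_mul_of_nonneg_left (by nlinarith [sq_nonneg (a - b)]) (by positivity)
        have e2 : p * (1 - p) * a ^ 2 ≤ (1 - p) * a ^ 2 := by
          nlinarith [mul_nonneg (mul_nonneg hq hq) (sq_nonneg a)]
        have e3 : p * (1 - p) * b ^ 2 ≤ p * b ^ 2 := by
          nlinarith [mul_nonneg (mul_nonneg hp0 hp0) (sq_nonneg b)]
        nlinarith
      nlinarith [mul_le_mul_of_nonneg_left this (sq_nonneg (a - b))]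
    have : (1 - p) * (a ^ 2 * Real.log m) + p * (b ^ 2 * Real.log m) = m * Real.log m := by
      rw [hm]; ring
    nlinarith

/-- The Dirichlet energy of `f` on the subsets of `s`: the sum of the second moments of its discrete
derivatives. For a Boolean function it is the total influence. -/
noncomputable def energy [DecidableEq ι] (p : ℝ) (s : Finset ι) (f : Finset ι → ℝ) : ℝ :=
  ∑ j ∈ s, bexp p s (fun S => ddiff j f S ^ 2)

theorem energy_insert [DecidableEq ι] (p : ℝ) {s : Finset ι} {i : ι} (hi : i ∉ s)
    (f : Finset ι → ℝ) :
    energy p (insert i s) f = bexp p s (fun S => (f (insert i S) - f S) ^ 2)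
      + ((1 - p) * energy p s f + p * energy p s (fun S => f (insert i S))) := by
  unfold energy
  rw [Finset.sum_insert hi, bexp_insert p hi]
  congr 1
  · rw [bexp_congr (g := fun S => (f (insert i S) - f S) ^ 2)
        (fun S hS => by rw [ddiff_notMem f fun h => hi (hS h)]),
      bexp_congr (f := fun S => ddiff i f (insert i S) ^ 2) (g := fun S => (f (insert i S) - f S) ^ 2)
        (fun S hS => by rw [ddiff_insert_self f fun h => hi (hS h)])]
    ring
  · rw [Finset.mul_sum, Finset.mul_sum, ← Finset.sum_add_distrib]
    refine Finset.sum_congr rfl fun j hj => ?_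
    have hij : i ≠ j := fun h => hi (h ▸ hj)
    rw [bexp_insert p hi]
    simp only [ddiff_insert f hij]

/-- The logarithmic Sobolev inequality on the `p`-biased cube. The two-point inequality, applied to the
`L²` norms of the two halves of `h`, tensorizes because of Minkowski's inequality. -/
theorem logSobolev [DecidableEq ι] {p : ℝ} (hp0 : 0 ≤ p) (hp1 : p ≤ 1) (s : Finset ι) :
    ∀ h : Finset ι → ℝ, bexp p s (fun S => h S ^ 2 * Real.log (h S ^ 2)) ≤
      bexp p s (fun S => h S ^ 2) * Real.log (bexp p s (fun S => h S ^ 2)) + 2 * energy p s h := by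
  induction s using Finset.induction_on with
  | empty => intro h; simp [bexp_empty, energy]
  | insert i s hi ih =>
    intro h
    have hq : 0 ≤ 1 - p := sub_nonneg.2 hp1
    rw [energy_insert p hi, bexp_insert p hi, bexp_insert p hi]
    have i0 := mul_le_mul_of_nonneg_left (ih h) hq
    have i1 := mul_le_mul_of_nonneg_left (ih fun S => h (insert i S)) hp0
    set N0 := bexp p s (fun S => h S ^ 2) with hN0
    set N1 := bexp p s (fun S => h (insert i S) ^ 2) with hN1
    have n0 : 0 ≤ N0 := bexp_nonneg hp0 hp1 fun S _ => sq_nonneg _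
    have n1 : 0 ≤ N1 := bexp_nonneg hp0 hp1 fun S _ => sq_nonneg _
    have t := two_point_logSobolev (√N0) (√N1) hp0 hp1
    rw [Real.sq_sqrt n0, Real.sq_sqrt n1] at t
    have mink : (√N0 - √N1) ^ 2 ≤ bexp p s (fun S => (h (insert i S) - h S) ^ 2) := by
      have cs := bexp_cauchy hp0 hp1 s h (fun S => h (insert i S))
      have e : bexp p s (fun S => (h (insert i S) - h S) ^ 2)
          = N0 + N1 - 2 * bexp p s (fun S => h S * h (insert i S)) := by
        have e1 : bexp p s (fun S => (h (insert i S) - h S) ^ 2) = bexp p s (fun S =>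
            1 * (1 * h S ^ 2 + 1 * h (insert i S) ^ 2) + (-2) * (h S * h (insert i S))) :=
          bexp_congr fun S _ => by ring
        rw [e1, bexp_lin, bexp_lin]; ring
      have c2 : bexp p s (fun S => h S * h (insert i S)) ≤ √N0 * √N1 := by
        rw [← Real.sqrt_mul n0]
        exact Real.le_sqrt_of_sq_le cs
      rw [e]
      nlinarith [Real.sq_sqrt n0, Real.sq_sqrt n1]
    nlinarith

/-- If the second moment of `h` exceeds `exp L` times its squared first moment, then the entropy of
`h ^ 2` is at least `L` times the second moment, and the logarithmic Sobolev inequality applies; if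
not, the last term alone is large enough. -/
theorem second_moment_le [DecidableEq ι] {p : ℝ} (hp0 : 0 ≤ p) (hp1 : p ≤ 1) (s : Finset ι)
    {L : ℝ} (hL : 0 ≤ L) (h : Finset ι → ℝ) :
    L * bexp p s (fun S => h S ^ 2) ≤
      2 * energy p s h + L * Real.exp L * bexp p s (fun S => |h S|) ^ 2 := by
  set m := bexp p s (fun S => h S ^ 2) with hm
  set e := bexp p s (fun S => |h S|) with he
  have hm0 : 0 ≤ m := bexp_nonneg hp0 hp1 fun S _ => sq_nonneg _
  have he0 : 0 ≤ e := bexp_nonneg hp0 hp1 fun S _ => abs_nonneg _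
  have hE0 : 0 ≤ energy p s h :=
    Finset.sum_nonneg fun j _ => bexp_nonneg hp0 hp1 fun S _ => sq_nonneg _
  by_cases hc : m ≤ Real.exp L * e ^ 2
  · nlinarith [mul_le_mul_of_nonneg_left hc hL]
  push Not at hc
  have hmpos : 0 < m := lt_of_le_of_lt (by positivity) hc
  have hepos : 0 < e := by
    have : m ^ 2 ≤ e * bexp p s (fun S => |h S| ^ 3) := by
      refine Finset.sum_sq_le_sum_mul_sum_of_sq_le_mul _ ?_ ?_ ?_
      · intro S _
        exact mul_nonneg (mul_nonneg (pow_nonneg hp0 _) (pow_nonneg (sub_nonneg.2 hp1) _)) (by positivity)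
      · intro S _
        exact mul_nonneg (mul_nonneg (pow_nonneg hp0 _) (pow_nonneg (sub_nonneg.2 hp1) _)) (by positivity)
      · intro S _
        have e2 : h S ^ 2 = |h S| ^ 2 := (sq_abs _).symm
        simp only [e2]
        exact le_of_eq (by ring)
    rcases he0.eq_or_lt with h0 | h0
    · rw [← h0] at this; nlinarith
    · exact h0
  have ls := logSobolev hp0 hp1 s h
  rw [← hm] at ls
  set c := m / e with hcdef
  have hcpos : 0 < c := div_pos hmpos hepos
  -- The entropy lower bound: integrate `log (c / |h|) ≤ c / |h| - 1` against `h ^ 2`; the choice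
  -- `c = m / e` makes the right-hand side vanish.
  have lower : m * Real.log (c ^ 2) ≤ bexp p s (fun S => h S ^ 2 * Real.log (h S ^ 2)) := by
    have pt : ∀ S ⊆ s, (Real.log (c ^ 2) + 2) * h S ^ 2 + (-2 * c) * |h S|
        ≤ h S ^ 2 * Real.log (h S ^ 2) := by
      intro S _
      rcases (abs_nonneg (h S)).eq_or_lt with h0 | h0
      · have : h S = 0 := abs_eq_zero.1 h0.symm
        simp [this]
      · have l := Real.log_le_sub_one_of_pos (div_pos hcpos h0)
        rw [Real.log_div hcpos.ne' h0.ne'] at l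
        rw [← sq_abs (h S), Real.log_pow, Real.log_pow]
        have l2 := mul_le_mul_of_nonneg_left l (sq_nonneg |h S|)
        have : |h S| ^ 2 * (c / |h S| - 1) = c * |h S| - |h S| ^ 2 := by field_simp
        rw [this] at l2
        push_cast
        nlinarith
    have := bexp_mono hp0 hp1 pt
    rw [bexp_lin, ← hm, ← he] at this
    have ce : c * e = m := div_mul_cancel₀ m hepos.ne'
    nlinarith
  have hlog : L + Real.log m ≤ Real.log (c ^ 2) := by
    rw [← Real.log_exp L, ← Real.log_mul (Real.exp_pos L).ne' hmpos.ne']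
    apply Real.log_le_log (by positivity)
    rw [hcdef, div_pow, le_div_iff₀ (by positivity)]
    nlinarith [mul_le_mul_of_nonneg_right hc.le hm0]
  have := mul_le_mul_of_nonneg_left hlog hm0
  have : 0 ≤ L * Real.exp L * e ^ 2 := by positivity
  nlinarith

/-- The Falik–Samorodnitsky inequality: a function with bounded energy all of whose derivatives have
small first moments has small variance. In the induction step, `fb` is the average of `f` over
the coordinate `i` and `d` its derivative in that direction; `second_moment_le` applies to `d`, the
induction hypothesis to `fb`, and both the variance and the energy of `f` split accordingly. -/
theorem variance_le [DecidableEq ι] {p : ℝ} (hp0 : 0 ≤ p) (hp1 : p ≤ 1) {L : ℝ} (hL : 0 ≤ L)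
    (s : Finset ι) : ∀ f : Finset ι → ℝ,
    L * (bexp p s (fun S => f S ^ 2) - bexp p s f ^ 2) ≤
      2 * energy p s f + L * Real.exp L * ∑ j ∈ s, bexp p s (fun S => |ddiff j f S|) ^ 2 := by
  induction s using Finset.induction_on with
  | empty => intro f; simp [bexp_empty, energy]
  | insert i s hi ih =>
    intro f
    have hq : 0 ≤ 1 - p := sub_nonneg.2 hp1
    set f1 : Finset ι → ℝ := fun S => f (insert i S) with hf1
    set fb : Finset ι → ℝ := fun S => (1 - p) * f S + p * f1 S with hfb
    set d : Finset ι → ℝ := fun S => f1 S - f S with hd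
    have efb : bexp p (insert i s) f = bexp p s fb := by rw [bexp_insert p hi, hfb, bexp_lin]
    have esq : bexp p (insert i s) (fun S => f S ^ 2)
        = bexp p s (fun S => fb S ^ 2) + p * (1 - p) * bexp p s (fun S => d S ^ 2) := by
      have : bexp p (insert i s) (fun S => f S ^ 2)
          = bexp p s (fun S => 1 * fb S ^ 2 + p * (1 - p) * d S ^ 2) := by
        rw [bexp_insert p hi, ← bexp_lin]
        refine bexp_congr fun S _ => ?_
        simp only [hfb, hd, hf1]; ring
      rw [this, bexp_lin]; ring
    have een : energy p (insert i s) f = bexp p s (fun S => d S ^ 2)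
        + (energy p s fb + p * (1 - p) * energy p s d) := by
      rw [energy_insert p hi]
      congr 1
      simp only [energy, Finset.mul_sum, ← Finset.sum_add_distrib]
      refine Finset.sum_congr rfl fun j _ => ?_
      have := bexp_lin p s 1 (p * (1 - p)) (fun S => ddiff j fb S ^ 2) (fun S => ddiff j d S ^ 2)
      rw [one_mul] at this
      rw [← this, ← bexp_lin]
      refine bexp_congr fun S _ => ?_
      simp only [ddiff, hfb, hd, hf1]; ring
    have hsum : bexp p s (fun S => |d S|) ^ 2 + ∑ j ∈ s, bexp p s (fun S => |ddiff j fb S|) ^ 2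
        ≤ ∑ j ∈ insert i s, bexp p (insert i s) (fun S => |ddiff j f S|) ^ 2 := by
      rw [Finset.sum_insert hi]
      refine add_le_add (le_of_eq ?_) (Finset.sum_le_sum fun j hj => ?_)
      · rw [bexp_insert p hi, bexp_congr (f := fun S => |ddiff i f S|) (g := fun S => |d S|)
            (fun S hS => by rw [ddiff_notMem f fun h => hi (hS h)]),
          bexp_congr (f := fun S => |ddiff i f (insert i S)|) (g := fun S => |d S|)
            (fun S hS => by rw [ddiff_insert_self f fun h => hi (hS h)])]
        ring
      · have hij : i ≠ j := fun h => hi (h ▸ hj)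
        refine pow_le_pow_left₀ (bexp_nonneg hp0 hp1 fun S _ => abs_nonneg _) ?_ 2
        rw [bexp_insert p hi, ← bexp_lin]
        refine bexp_mono hp0 hp1 fun S _ => ?_
        have e : ddiff j fb S = (1 - p) * ddiff j f S + p * ddiff j f (insert i S) := by
          rw [ddiff_insert f hij]
          simp only [ddiff, hfb, hf1]; ring
        rw [e]
        refine (abs_add_le _ _).trans (le_of_eq ?_)
        rw [abs_mul, abs_mul, abs_of_nonneg hq, abs_of_nonneg hp0]
    have k1 := mul_le_mul_of_nonneg_left (second_moment_le hp0 hp1 s hL d) (mul_nonneg hp0 hq)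
    have k2 := ih fb
    have k3 := mul_le_mul_of_nonneg_left hsum (mul_nonneg hL (Real.exp_pos L).le)
    have k4 : p * (1 - p) * (L * Real.exp L * bexp p s (fun S => |d S|) ^ 2)
        ≤ L * Real.exp L * bexp p s (fun S => |d S|) ^ 2 :=
      mul_le_of_le_one_left (by positivity) (by nlinarith)
    have k5 : 0 ≤ bexp p s (fun S => d S ^ 2) := bexp_nonneg hp0 hp1 fun S _ => sq_nonneg _
    rw [efb, esq, een]
    nlinarith

/-- The Margulis–Russo formula. -/
theorem hasDerivAt_bexp [DecidableEq ι] (p : ℝ) (s : Finset ι) : ∀ f : Finset ι → ℝ,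
    HasDerivAt (fun p => bexp p s f) (∑ i ∈ s, bexp p s (ddiff i f)) p := by
  induction s using Finset.induction_on with
  | empty => intro f; simpa [bexp_empty] using hasDerivAt_const p (f ∅)
  | insert i s hi ih =>
    intro f
    simp only [bexp_insert _ hi]
    have h0 := ((hasDerivAt_id p).const_sub 1).mul (ih f)
    have h1 := (hasDerivAt_id p).mul (ih fun S => f (insert i S))
    refine (h0.add h1).congr_deriv ?_
    rw [Finset.sum_insert hi,
      bexp_congr (f := ddiff i f) (g := fun S => 1 * f (insert i S) + (-1) * f S)
        (fun S hS => by rw [ddiff_notMem f fun h => hi (hS h)]; ring),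
      bexp_congr (f := fun S => ddiff i f (insert i S))
        (g := fun S => 1 * f (insert i S) + (-1) * f S)
        (fun S hS => by rw [ddiff_insert_self f fun h => hi (hS h)]; ring), bexp_lin,
      Finset.sum_add_distrib, ← Finset.mul_sum, ← Finset.mul_sum,
      Finset.sum_congr (rfl : s = s) (f := fun j => bexp p s fun S => ddiff j f (insert i S))
        (g := fun j => bexp p s (ddiff j fun S => f (insert i S)))
        (fun j hj => bexp_congr fun S _ => ddiff_insert f (fun h : i = j => hi (h ▸ hj)) S)]
    simp only [id]
    ring

/-! ### The nullity function of a code -/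

/-- The codewords of `C` vanishing on `S`. -/
def vanishing [Fintype ι] (C : Submodule (ZMod 2) (ι → ZMod 2)) (S : Finset ι) :
    Submodule (ZMod 2) (ι → ZMod 2) :=
  C ⊓ LinearMap.ker (LinearMap.funLeft (ZMod 2) (ZMod 2) (Subtype.val : {i // i ∈ S} → ι))

theorem mem_vanishing [Fintype ι] {C : Submodule (ZMod 2) (ι → ZMod 2)} {S : Finset ι}
    {x : ι → ZMod 2} : x ∈ vanishing C S ↔ x ∈ C ∧ ∀ i ∈ S, x i = 0 := by
  simp [vanishing, LinearMap.mem_ker, funext_iff, LinearMap.funLeft_apply]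

theorem rankC_add_finrank [Fintype ι] (C : Submodule (ZMod 2) (ι → ZMod 2)) (S : Finset ι) :
    rankC C S + Module.finrank (ZMod 2) (vanishing C S) = Module.finrank (ZMod 2) C := by
  rw [← LinearMap.finrank_range_add_finrank_ker
    ((LinearMap.funLeft (ZMod 2) (ZMod 2) (Subtype.val : {i // i ∈ S} → ι)).domRestrict C),
    LinearMap.range_domRestrict, LinearMap.ker_domRestrict, rankC, vanishing,
    ← Submodule.map_comap_subtype, Submodule.finrank_map_subtype_eq]

theorem vanishing_insert [Fintype ι] [DecidableEq ι] (C : Submodule (ZMod 2) (ι → ZMod 2))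
    (i : ι) (S : Finset ι) : vanishing C (insert i S) = vanishing C S ⊓ vanishing C {i} := by
  ext x
  simp only [Submodule.mem_inf, mem_vanishing, Finset.mem_insert, Finset.mem_singleton]
  grind

theorem fC_eq [Fintype ι] (C : Submodule (ZMod 2) (ι → ZMod 2)) (S : Finset ι) :
    fC C S = S.card - Module.finrank (ZMod 2) C + Module.finrank (ZMod 2) (vanishing C S) := by
  have : (rankC C S : ℝ) + Module.finrank (ZMod 2) (vanishing C S) = Module.finrank (ZMod 2) C := by
    exact_mod_cast rankC_add_finrank C S
  rw [fC]; linarith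

theorem rankC_le_card [Fintype ι] (C : Submodule (ZMod 2) (ι → ZMod 2)) (S : Finset ι) :
    rankC C S ≤ S.card := by
  refine (Submodule.finrank_le _).trans ?_
  simp

theorem fC_nonneg [Fintype ι] (C : Submodule (ZMod 2) (ι → ZMod 2)) (S : Finset ι) :
    0 ≤ fC C S := sub_nonneg.2 (by exact_mod_cast rankC_le_card C S)

theorem fC_empty [Fintype ι] (C : Submodule (ZMod 2) (ι → ZMod 2)) : fC C ∅ = 0 := by
  have := rankC_le_card C ∅
  simp at this
  simp [fC, this]

theorem fC_univ [Fintype ι] (C : Submodule (ZMod 2) (ι → ZMod 2)) :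
    fC C Finset.univ = Fintype.card ι - Module.finrank (ZMod 2) C := by
  have : vanishing C Finset.univ = ⊥ := by
    rw [eq_bot_iff]
    intro x hx
    rw [mem_vanishing] at hx
    exact funext fun i => hx.2 i (Finset.mem_univ i)
  rw [fC_eq, this]; simp

theorem fC_insert [Fintype ι] [DecidableEq ι] (C : Submodule (ZMod 2) (ι → ZMod 2)) {i : ι}
    {S : Finset ι} (hi : i ∉ S) : fC C (insert i S) = fC C S ∨ fC C (insert i S) = fC C S + 1 := by
  have h1 := Submodule.finrank_sup_add_finrank_inf_eq (vanishing C S) (vanishing C {i})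
  rw [← vanishing_insert] at h1
  have h2 : Module.finrank (ZMod 2) ↥(vanishing C S ⊔ vanishing C {i})
      ≤ Module.finrank (ZMod 2) C :=
    Submodule.finrank_mono (sup_le inf_le_left inf_le_left)
  have h3 := rankC_add_finrank C {i}
  have h4 := rankC_le_card C {i}
  have h5 : Module.finrank (ZMod 2) (vanishing C (insert i S))
      ≤ Module.finrank (ZMod 2) (vanishing C S) := by
    rw [vanishing_insert]; exact Submodule.finrank_mono inf_le_left
  rw [Finset.card_singleton] at h4
  rw [fC_eq, fC_eq, Finset.card_insert_of_notMem hi]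
  have h6 : Module.finrank (ZMod 2) (vanishing C (insert i S))
        = Module.finrank (ZMod 2) (vanishing C S) ∨
      Module.finrank (ZMod 2) (vanishing C (insert i S)) + 1
        = Module.finrank (ZMod 2) (vanishing C S) := by omega
  rcases h6 with h | h
  · right; rw [h]; push_cast; ring
  · left; rw [← h]; push_cast; ring

/-- The rank function of a matroid is submodular, so the nullity is supermodular. -/
theorem fC_supermodular [Fintype ι] [DecidableEq ι] (C : Submodule (ZMod 2) (ι → ZMod 2))
    {i j : ι} (hij : i ≠ j) {S : Finset ι} (hi : i ∉ S) (hj : j ∉ S) :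
    fC C (insert i S) + fC C (insert j S) ≤ fC C (insert i (insert j S)) + fC C S := by
  have h1 := Submodule.finrank_sup_add_finrank_inf_eq (vanishing C (insert i S))
    (vanishing C (insert j S))
  have e : vanishing C (insert i S) ⊓ vanishing C (insert j S)
      = vanishing C (insert i (insert j S)) := by
    ext x
    simp only [Submodule.mem_inf, mem_vanishing, Finset.mem_insert]
    grind
  rw [e] at h1
  have h2 : Module.finrank (ZMod 2) ↥(vanishing C (insert i S) ⊔ vanishing C (insert j S))
      ≤ Module.finrank (ZMod 2) (vanishing C S) := by
    refine Submodule.finrank_mono (sup_le ?_ ?_) <;>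
    · rw [vanishing_insert]; exact inf_le_left
  simp only [fC_eq]
  rw [Finset.card_insert_of_notMem (by simp [hij, hi] : i ∉ insert j S), Finset.card_insert_of_notMem hi,
    Finset.card_insert_of_notMem hj]
  have h3 : (Module.finrank (ZMod 2) (vanishing C (insert i S)) : ℝ)
      + Module.finrank (ZMod 2) (vanishing C (insert j S))
      ≤ Module.finrank (ZMod 2) (vanishing C (insert i (insert j S)))
      + Module.finrank (ZMod 2) (vanishing C S) := by
    exact_mod_cast (by omega)
  push_cast
  linarith

theorem fC_map [Fintype ι] (C : Submodule (ZMod 2) (ι → ZMod 2)) {π : Equiv.Perm ι}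
    (hπ : PreservesCode C π) (S : Finset ι) : fC C (S.map π.toEmbedding) = fC C S := by
  have e : (vanishing C (S.map π.toEmbedding)).map
      (LinearEquiv.funCongrLeft (ZMod 2) (ZMod 2) π : (ι → ZMod 2) →ₗ[ZMod 2] (ι → ZMod 2))
      = vanishing C S := by
    ext x
    rw [Submodule.mem_map]
    constructor
    · rintro ⟨y, hy, rfl⟩
      rw [mem_vanishing] at hy ⊢
      refine ⟨(hπ y).1 hy.1, fun i hi => hy.2 (π i) (by simpa using hi)⟩
    · intro hx
      rw [mem_vanishing] at hx
      have hc : (x ∘ π.symm) ∘ π = x := by ext; simp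
      refine ⟨x ∘ π.symm, ?_, hc⟩
      rw [mem_vanishing]
      refine ⟨(hπ _).2 (by rw [hc]; exact hx.1), ?_⟩
      intro i hi
      obtain ⟨k, hk, rfl⟩ := Finset.mem_map.1 hi
      simpa using hx.2 k hk
  rw [fC_eq, fC_eq, Finset.card_map, ← e, LinearEquiv.finrank_map_eq]

theorem insert_erase_self [DecidableEq ι] (i : ι) (S : Finset ι) :
    insert i (S.erase i) = insert i S := by
  ext x; simp only [Finset.mem_insert, Finset.mem_erase]; grind

/-- The derivative of the nullity is the indicator of the event that the coordinate `i` is determined by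
the coordinates in `S \ {i}`. -/
theorem ddiff_fC_bool [Fintype ι] [DecidableEq ι] (C : Submodule (ZMod 2) (ι → ZMod 2)) (i : ι)
    (S : Finset ι) : ddiff i (fC C) S = 0 ∨ ddiff i (fC C) S = 1 := by
  have := fC_insert C (Finset.notMem_erase i S)
  rw [insert_erase_self] at this
  unfold ddiff
  rcases this with h | h
  · left; linarith
  · right; linarith

theorem ddiff_self [DecidableEq ι] (i : ι) (f : Finset ι → ℝ) (S : Finset ι) :
    ddiff i (ddiff i f) S = 0 := by
  simp [ddiff, insert_erase_self]

/-- Being determined by the coordinates in `S` is a monotone event. -/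
theorem ddiff_ddiff_nonneg [Fintype ι] [DecidableEq ι] (C : Submodule (ZMod 2) (ι → ZMod 2))
    (i j : ι) (S : Finset ι) : 0 ≤ ddiff j (ddiff i (fC C)) S := by
  by_cases hij : i = j
  · rw [hij, ddiff_self]
  · set T := (S.erase j).erase i with hT
    have hi : i ∉ T := by simp [hT]
    have hj : j ∉ T := by simp [hT]
    have h := fC_supermodular C hij hi hj
    have e1 : insert i (insert j S) = insert i (insert j T) := by
      ext x; simp only [hT, Finset.mem_insert, Finset.mem_erase]; grind
    have e2 : (insert j S).erase i = insert j T := by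
      ext x; simp only [hT, Finset.mem_insert, Finset.mem_erase]; grind
    have e3 : insert i (S.erase j) = insert i T := by
      ext x; simp only [hT, Finset.mem_insert, Finset.mem_erase]; grind
    simp only [ddiff]
    rw [e1, e2, e3, ← hT]
    linarith

theorem ddiff_ddiff_bool [Fintype ι] [DecidableEq ι] (C : Submodule (ZMod 2) (ι → ZMod 2))
    (i j : ι) (S : Finset ι) :
    ddiff j (ddiff i (fC C)) S = 0 ∨ ddiff j (ddiff i (fC C)) S = 1 := by
  have h0 := ddiff_ddiff_nonneg C i j S
  have h1 := ddiff_fC_bool C i (insert j S)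
  have h2 := ddiff_fC_bool C i (S.erase j)
  change _ ∨ ddiff i (fC C) (insert j S) - ddiff i (fC C) (S.erase j) = 1
  change ddiff i (fC C) (insert j S) - ddiff i (fC C) (S.erase j) = 0 ∨ _
  change 0 ≤ ddiff i (fC C) (insert j S) - ddiff i (fC C) (S.erase j) at h0
  grind

theorem bexp_map [Fintype ι] (p : ℝ) (π : Equiv.Perm ι) (f : Finset ι → ℝ) :
    bexp p Finset.univ (fun S => f (S.map π.toEmbedding)) = bexp p Finset.univ f := by
  unfold bexp
  simp only [Finset.powerset_univ]
  refine Fintype.sum_equiv (Equiv.finsetCongr π) _ _ fun S => ?_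
  simp [Equiv.finsetCongr_apply]

theorem ddiff_map [DecidableEq ι] (π : Equiv.Perm ι) {f g : Finset ι → ℝ}
    (h : ∀ S, g (S.map π.toEmbedding) = f S) (i : ι) (S : Finset ι) :
    ddiff (π i) g (S.map π.toEmbedding) = ddiff i f S := by
  have e1 : insert (π i) (S.map π.toEmbedding) = (insert i S).map π.toEmbedding := by
    simp [Finset.map_insert]
  have e2 : (S.map π.toEmbedding).erase (π i) = (S.erase i).map π.toEmbedding := by
    simp [Finset.map_erase]
  simp only [ddiff, e1, e2, h]

/-! ### Consequences of double transitivity -/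

theorem muC_eq_bexp [Fintype ι] (C : Submodule (ZMod 2) (ι → ZMod 2)) (p : ℝ) :
    muC C p = bexp p Finset.univ (fC C) := by
  simp [muC, bexp]

theorem bexp_ddiff_ddiff_eq [Fintype ι] [DecidableEq ι] {C : Submodule (ZMod 2) (ι → ZMod 2)}
    (hC : DoublyTransitive C) (p : ℝ) {i j i' j' : ι} (h : i ≠ j) (h' : i' ≠ j') :
    bexp p Finset.univ (ddiff j (ddiff i (fC C))) =
      bexp p Finset.univ (ddiff j' (ddiff i' (fC C))) := by
  obtain ⟨π, hπ, rfl, rfl⟩ := hC i j i' j' h h'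
  rw [← bexp_map p π (ddiff (π j) _)]
  exact bexp_congr fun S _ => (ddiff_map π (ddiff_map π (fC_map C hπ) i) j S).symm

theorem bexp_ddiff_eq [Fintype ι] [DecidableEq ι] {C : Submodule (ZMod 2) (ι → ZMod 2)}
    (hC : DoublyTransitive C) (p : ℝ) (i i' : ι) :
    bexp p Finset.univ (ddiff i (fC C)) = bexp p Finset.univ (ddiff i' (fC C)) := by
  by_cases h : i = i'
  · rw [h]
  obtain ⟨π, hπ, rfl, -⟩ := hC i i' i' i h (Ne.symm h)
  rw [← bexp_map p π (ddiff (π i) _)]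
  exact bexp_congr fun S _ => (ddiff_map π (fC_map C hπ) i S).symm

theorem hasDerivAt_muC [Fintype ι] [DecidableEq ι] {C : Submodule (ZMod 2) (ι → ZMod 2)}
    (hC : DoublyTransitive C) (i : ι) (p : ℝ) :
    HasDerivAt (muC C) (Fintype.card ι * bexp p Finset.univ (ddiff i (fC C))) p := by
  have e : muC C = fun p => bexp p Finset.univ (fC C) := funext (muC_eq_bexp C)
  rw [e]
  refine (hasDerivAt_bexp p Finset.univ (fC C)).congr_deriv ?_
  rw [Finset.sum_congr rfl fun j _ => bexp_ddiff_eq hC p j i]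
  simp

/-- For a doubly transitive code, the event that `i` is determined by the other coordinates in `S` has
equal influences from all coordinates other than `i`, so `variance_le` bounds its variance in terms
of its total influence alone. -/
theorem steep_bound [Fintype ι] [DecidableEq ι] {C : Submodule (ZMod 2) (ι → ZMod 2)}
    (hC : DoublyTransitive C) (i : ι) {p : ℝ} (hp0 : 0 ≤ p) (hp1 : p ≤ 1) {L : ℝ} (hL : 0 ≤ L)
    (hn : 2 ≤ Fintype.card ι) :
    L * (bexp p Finset.univ (ddiff i (fC C)) * (1 - bexp p Finset.univ (ddiff i (fC C)))) ≤
      2 * (∑ j, bexp p Finset.univ (ddiff j (ddiff i (fC C))))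
      + L * Real.exp L * ((∑ j, bexp p Finset.univ (ddiff j (ddiff i (fC C)))) ^ 2
        / (Fintype.card ι - 1)) := by
  have key := variance_le hp0 hp1 hL Finset.univ (ddiff i (fC C))
  have e1 : bexp p Finset.univ (fun S => ddiff i (fC C) S ^ 2)
      = bexp p Finset.univ (ddiff i (fC C)) :=
    bexp_congr fun S _ => by rcases ddiff_fC_bool C i S with h | h <;> rw [h] <;> norm_num
  have e2 : energy p Finset.univ (ddiff i (fC C))
      = ∑ j, bexp p Finset.univ (ddiff j (ddiff i (fC C))) :=
    Finset.sum_congr rfl fun j _ => bexp_congr fun S _ => by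
      rcases ddiff_ddiff_bool C i j S with h | h <;> rw [h] <;> norm_num
  have e3 : ∀ j, bexp p Finset.univ (fun S => |ddiff j (ddiff i (fC C)) S|)
      = bexp p Finset.univ (ddiff j (ddiff i (fC C))) := fun j =>
    bexp_congr fun S _ => abs_of_nonneg (ddiff_ddiff_nonneg C i j S)
  have e0 : bexp p Finset.univ (ddiff i (ddiff i (fC C))) = 0 := by
    rw [← bexp_zero p (Finset.univ : Finset ι)]
    exact bexp_congr fun S _ => ddiff_self i _ S
  obtain ⟨k, hk⟩ : ∃ k, k ≠ i := Fintype.exists_ne_of_one_lt_card (by omega) i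
  have hcard : (((Finset.univ : Finset ι).erase i).card : ℝ) = Fintype.card ι - 1 := by
    rw [Finset.card_erase_of_mem (Finset.mem_univ i), Finset.card_univ, Nat.cast_sub (by omega)]
    simp
  have hc : ∀ j ∈ (Finset.univ : Finset ι).erase i, bexp p Finset.univ (ddiff j (ddiff i (fC C)))
      = bexp p Finset.univ (ddiff k (ddiff i (fC C))) := fun j hj =>
    bexp_ddiff_ddiff_eq hC p (Finset.ne_of_mem_erase hj).symm hk.symm
  have s1 : ∑ j, bexp p Finset.univ (ddiff j (ddiff i (fC C)))
      = (Fintype.card ι - 1) * bexp p Finset.univ (ddiff k (ddiff i (fC C))) := by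
    rw [← Finset.add_sum_erase _ _ (Finset.mem_univ i), e0, zero_add, Finset.sum_congr rfl hc,
      Finset.sum_const, nsmul_eq_mul, hcard]
  have s2 : ∑ j, bexp p Finset.univ (ddiff j (ddiff i (fC C))) ^ 2
      = (Fintype.card ι - 1) * bexp p Finset.univ (ddiff k (ddiff i (fC C))) ^ 2 := by
    rw [← Finset.add_sum_erase _ _ (Finset.mem_univ i), e0,
      Finset.sum_congr rfl fun j hj => by rw [hc j hj],
      Finset.sum_const, nsmul_eq_mul, hcard]
    ring
  have hn' : (0 : ℝ) < Fintype.card ι - 1 := by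
    have : (2 : ℝ) ≤ Fintype.card ι := by exact_mod_cast hn
    linarith
  simp only [e3] at key
  rw [e1, e2, s2] at key
  refine (le_of_eq (by ring)).trans (key.trans (le_of_eq ?_))
  rw [s1]
  field_simp

/-! ### Sharp threshold -/

theorem exists_mem_Icc_sub_eq {f f' : ℝ → ℝ} {a b : ℝ} (hab : a ≤ b) (hf : ∀ x, HasDerivAt f (f' x) x) :
    ∃ c ∈ Set.Icc a b, f b - f a = f' c * (b - a) := by
  rcases hab.eq_or_lt with h | h
  · subst h; exact ⟨a, by simp, by simp⟩
  · obtain ⟨c, hc, he⟩ := exists_hasDerivAt_eq_slope f f' h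
      (fun x _ => (hf x).continuousAt.continuousWithinAt) fun x _ => hf x
    refine ⟨c, ⟨hc.1.le, hc.2.le⟩, ?_⟩
    rw [he]
    have : b - a ≠ 0 := (sub_pos.2 h).ne'
    field_simp

/-- If `g = m'` is nondecreasing with values at most `1` and climbs with slope at least `2 / η` while
it lies in `[η, 1 - η]`, then it cannot stay there on all of `[R - η, R]`. So either `g` is at most
`η` up to `R - η`, or it is at least `1 - η` from `R` on. -/
theorem threshold_bound {m g I : ℝ → ℝ} {R η : ℝ} (hη : 0 < η) (hηR : η ≤ R) (hR1 : R ≤ 1)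
    (hm : ∀ x, HasDerivAt m (g x) x) (hg : ∀ x, HasDerivAt g (I x) x)
    (hg1 : ∀ x, 0 ≤ x → x ≤ 1 → g x ≤ 1)
    (hI : ∀ x, 0 ≤ x → x ≤ 1 → 0 ≤ I x) (hm0 : m 0 = 0)
    (steep : ∀ x, 0 ≤ x → x ≤ 1 → η ≤ g x → g x ≤ 1 - η → 2 / η ≤ I x) :
    m R ≤ 2 * η ∨ m R ≤ m 1 - (1 - R) + η := by
  have mono : ∀ x y, 0 ≤ x → x ≤ y → y ≤ 1 → g x ≤ g y := by
    intro x y hx hxy hy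
    obtain ⟨c, hc, he⟩ := exists_mem_Icc_sub_eq hxy hg
    have := mul_nonneg (hI c (hx.trans hc.1) (hc.2.trans hy)) (sub_nonneg.2 hxy)
    linarith
  have ha0 : 0 ≤ R - η := by linarith
  by_cases h1 : g (R - η) ≤ η
  · left
    obtain ⟨c, hc, he⟩ := exists_mem_Icc_sub_eq ha0 hm
    obtain ⟨d, hd, he'⟩ := exists_mem_Icc_sub_eq (by linarith : R - η ≤ R) hm
    have c1 : g c ≤ η := (mono c _ hc.1 hc.2 (by linarith)).trans h1
    have d1 : g d ≤ 1 := hg1 d (ha0.trans hd.1) (hd.2.trans hR1)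
    have c2 := mul_le_mul_of_nonneg_right c1 (by linarith : 0 ≤ R - η - 0)
    have d2 := mul_le_mul_of_nonneg_right d1 (by linarith : 0 ≤ R - (R - η))
    nlinarith
  · right
    push Not at h1
    have h2 : 1 - η ≤ g R := by
      by_contra h2
      push Not at h2
      obtain ⟨c, hc, he⟩ := exists_mem_Icc_sub_eq (by linarith : R - η ≤ R) hg
      have hc1 : c ≤ 1 := hc.2.trans hR1
      have st := steep c (ha0.trans hc.1) hc1
        (h1.le.trans (mono _ _ ha0 hc.1 hc1))
        ((mono _ _ (ha0.trans hc.1) hc.2 hR1).trans h2.le)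
      have := mul_le_mul_of_nonneg_right st hη.le
      rw [div_mul_cancel₀ _ hη.ne'] at this
      have e : R - (R - η) = η := by ring
      rw [e] at he
      linarith
    obtain ⟨c, hc, he⟩ := exists_mem_Icc_sub_eq hR1 hm
    have c1 : 1 - η ≤ g c := h2.trans (mono _ _ (by linarith) hc.1 hc.2)
    have := mul_le_mul_of_nonneg_right c1 (sub_nonneg.2 hR1)
    nlinarith

/-- The quantitative form of the theorem, with the error `η` and the length required for it. The value
of `L` is chosen so that a total influence below `2 / η` contradicts `steep_bound` where the
probability that `i` is determined lies in `[η, 1 - η]`. -/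
theorem muC_div_card_bound [Fintype ι] [DecidableEq ι] {C : Submodule (ZMod 2) (ι → ZMod 2)}
    (hC : DoublyTransitive C) {R η L : ℝ} (hη : 0 < η) (hηR : η ≤ R) (hR1 : R ≤ 1)
    (hL : L = (4 / η + 1) / η ^ 2) (hn : 2 ≤ Fintype.card ι)
    (hbig : L * Real.exp L * (2 / η) ^ 2 < Fintype.card ι - 1) :
    muC C R / Fintype.card ι ≤ 2 * η ∨ muC C R / Fintype.card ι ≤ R - codeRate C + η := by
  obtain ⟨i⟩ : Nonempty ι := Fintype.card_pos_iff.1 (by omega)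
  have hn0 : (Fintype.card ι : ℝ) ≠ 0 := by
    have : Fintype.card ι ≠ 0 := by omega
    exact_mod_cast this
  have hnpos : (0 : ℝ) < Fintype.card ι - 1 := by
    have : (2 : ℝ) ≤ Fintype.card ι := by exact_mod_cast hn
    linarith
  have hL0 : 0 ≤ L := by rw [hL]; positivity
  have hI : ∀ x : ℝ, 0 ≤ x → x ≤ 1 →
      0 ≤ ∑ j, bexp x Finset.univ (ddiff j (ddiff i (fC C))) := fun x h0 h1 =>
    Finset.sum_nonneg fun j _ => bexp_nonneg h0 h1 fun S _ => ddiff_ddiff_nonneg C i j S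
  have key := threshold_bound (m := fun x => muC C x / Fintype.card ι)
    (g := fun x => bexp x Finset.univ (ddiff i (fC C)))
    (I := fun x => ∑ j, bexp x Finset.univ (ddiff j (ddiff i (fC C)))) hη hηR hR1
    (fun x => ((hasDerivAt_muC hC i x).div_const _).congr_deriv (by field_simp))
    (fun x => hasDerivAt_bexp x Finset.univ _)
    (fun x h0 h1 => by
      rw [← bexp_const x (Finset.univ : Finset ι) 1]
      exact bexp_mono h0 h1 fun S _ => by
        rcases ddiff_fC_bool C i S with h | h <;> rw [h]; norm_num)
    hI ?_ ?_
  · refine key.imp id fun h => h.trans (le_of_eq ?_)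
    have : muC C 1 = Fintype.card ι - Module.finrank (ZMod 2) C := by
      rw [muC, ← fC_univ, Finset.sum_eq_single Finset.univ]
      · simp
      · intro S _ hS
        have := Finset.card_lt_univ_of_notMem (s := S)
          (Classical.not_forall.1 fun h => hS (Finset.eq_univ_iff_forall.2 h)).choose_spec
        rw [sub_self, zero_pow (by omega)]
        simp
      · simp
    simp only [this, codeRate]
    field_simp
    ring
  · have : muC C 0 = 0 := by
      rw [muC, Finset.sum_eq_single ∅]
      · simp [fC_empty]
      · intro S _ hS
        rw [zero_pow (Finset.card_ne_zero.2 (Finset.nonempty_iff_ne_empty.2 hS))]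
        simp
      · simp
    simp [this]
  · intro x h0 h1 hl hu
    by_contra hcon
    push Not at hcon
    have hs := steep_bound hC i h0 h1 hL0 hn
    have hIx := hI x h0 h1
    set G := bexp x Finset.univ (ddiff i (fC C))
    set J := ∑ j, bexp x Finset.univ (ddiff j (ddiff i (fC C)))
    have q1 : η ^ 2 ≤ G * (1 - G) := by nlinarith
    have q2 : L * η ^ 2 = 4 / η + 1 := by rw [hL]; field_simp
    have q3 := mul_le_mul_of_nonneg_left q1 hL0
    have q4 : L * Real.exp L * (J ^ 2 / (Fintype.card ι - 1)) < 1 := by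
      rw [← mul_div_assoc, div_lt_one hnpos]
      refine lt_of_le_of_lt ?_ hbig
      have : J ^ 2 ≤ (2 / η) ^ 2 := pow_le_pow_left₀ hIx hcon.le 2
      exact mul_le_mul_of_nonneg_left this (by positivity)
    have q5 : 2 * (2 / η) = 4 / η := by ring
    linarith

end

/-- for doubly transitive codes of rate tending to `R`, `μ_{C_n}(R) = o(n)`. -/
theorem muC_at_rate_sublinear (R : ℝ) (hR0 : 0 < R) (hR1 : R < 1)
    (n : ℕ → ℕ) (hn : StrictMono n) (hpos : ∀ k, 0 < n k)
    (C : ∀ k, Submodule (ZMod 2) (Fin (n k) → ZMod 2))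
    (hdt : ∀ k, DoublyTransitive (C k))
    (hrate : Filter.Tendsto (fun k => codeRate (C k)) Filter.atTop (nhds R)) :
    Filter.Tendsto (fun k => muC (C k) R / (n k : ℝ)) Filter.atTop (nhds 0) := by
  rw [Metric.tendsto_atTop']
  rw [Metric.tendsto_nhds] at hrate
  intro ε hε
  set η := min (ε / 4) R with hηdef
  have hη : 0 < η := lt_min (by positivity) hR0
  set L := (4 / η + 1) / η ^ 2 with hL
  have hn' : Filter.Tendsto (fun k => (n k : ℝ)) Filter.atTop Filter.atTop :=
    tendsto_natCast_atTop_atTop.comp hn.tendsto_atTop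
  have hev := ((hrate η hη).and (hn'.eventually_gt_atTop (L * Real.exp L * (2 / η) ^ 2 + 1))).and
    (hn.tendsto_atTop.eventually_ge_atTop 2)
  obtain ⟨N, hN⟩ := Filter.eventually_atTop.1 hev
  refine ⟨N, fun k hk => ?_⟩
  obtain ⟨⟨h1, h2⟩, h3⟩ := hN k hk.le
  have hb := muC_div_card_bound (hdt k) hη (min_le_right _ _) hR1.le hL (by simpa using h3)
    (by rw [Fintype.card_fin]; linarith)
  rw [Fintype.card_fin] at hb
  have h0 : 0 ≤ muC (C k) R / (n k : ℝ) := by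
    refine div_nonneg ?_ (Nat.cast_nonneg _)
    rw [muC_eq_bexp]
    exact bexp_nonneg hR0.le hR1.le fun S _ => fC_nonneg _ S
  rw [Real.dist_eq, sub_zero, abs_of_nonneg h0]
  rw [Real.dist_eq, abs_lt] at h1
  have h4 : η ≤ ε / 4 := min_le_left _ _
  rcases hb with h | h <;> linarith
end

section
/- Let c > 1 be a constant and let (C_n) be a sequence of binary linear codes, where C_n has length n (n ranging over an infinite set of positive integers), such that for every n the weight distribution of C_n satisfies a_i ≤ c^i for all 0 ≤ i ≤ n, and the minimal distances satisfy d(C_n)/log(n) → ∞. Then for every p ∈ (0,1/2) with 4p(1-p) < 1/c², one has P_err(C_n, p) → 0 as n → ∞; that is, the sequence (C_n) corrects errors on BSC(p) with high probability. -/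
/-!
The proof is the union bound combined with the Bhattacharyya bound. For a fixed nonzero codeword
`x`, every `z` with `w(z + x) ≤ w(z)` is at most as likely as `z + x` (because `p < 1/2`), so
`P(z) ≤ √(P(z) P(z + x))`. Summing the right-hand side over all `z` factorizes over the
coordinates: a coordinate outside the support of `x` contributes `1`, one in the support
contributes `2√(p(1-p))` (`sum_prod_sqrt`). Hence
`P_err ≤ ∑_{x ∈ C, x ≠ 0} (2√(p(1-p)))^{w(x)}` (`Perr_le_sum`). Grouping the codewords by weight
and using `a_i ≤ c^i`, this is at most `∑_{i ≥ d} r^i = r^d / (1 - r)` with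
`r = 2c√(p(1-p)) < 1` (`Perr_le_geom`). Finally `d → ∞`, since `d / log n → ∞` and
`log n → ∞`.
-/

open Finset Filter

/-- Square root of the probability that a `Bernoulli(p)` bit equals `b`. -/
noncomputable def sqrtBit (p : ℝ) (b : ZMod 2) : ℝ :=
  if b = 0 then √(1 - p) else √p

lemma sqrtBit_nonneg (p : ℝ) (b : ZMod 2) : 0 ≤ sqrtBit p b := by
  unfold sqrtBit; split_ifs <;> positivity

lemma prod_sqrtBit {ι : Type} [Fintype ι] (p : ℝ) (z : ι → ZMod 2) :
    ∏ i, sqrtBit p (z i) =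
      √p ^ hammingNorm z * √(1 - p) ^ (Fintype.card ι - hammingNorm z) := by
  have h : #{i | z i = 0} = Fintype.card ι - hammingNorm z := by
    have := Finset.card_filter_add_card_filter_not (s := (univ : Finset ι)) (fun i => z i = 0)
    rw [Finset.card_univ] at this
    unfold hammingNorm
    simp only [ne_eq]
    omega
  unfold sqrtBit
  rw [Finset.prod_ite, Finset.prod_const, Finset.prod_const, h, mul_comm]
  rfl

lemma prod_sqrtBit_le {ι : Type} [Fintype ι] {p : ℝ} (hp1 : p < 1 / 2) {y z : ι → ZMod 2}
    (h : hammingNorm y ≤ hammingNorm z) :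
    ∏ i, sqrtBit p (z i) ≤ ∏ i, sqrtBit p (y i) := by
  rw [prod_sqrtBit, prod_sqrtBit]
  have hz : hammingNorm z ≤ Fintype.card ι := hammingNorm_le_card_fintype
  obtain ⟨k, hk⟩ := Nat.exists_eq_add_of_le h
  have hab : √p ≤ √(1 - p) := Real.sqrt_le_sqrt (by linarith)
  have e : Fintype.card ι - hammingNorm y = k + (Fintype.card ι - hammingNorm z) := by omega
  rw [e, hk, pow_add, pow_add, mul_assoc]
  gcongr

open scoped Classical in
/-- The Bhattacharyya sum `∑_z √(P(z) P(z + x))` factorizes over the coordinates. -/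
lemma sum_prod_sqrt {ι : Type} [Fintype ι] {p : ℝ} (hp0 : 0 < p) (hp1 : p < 1 / 2)
    (x : ι → ZMod 2) :
    ∑ z : ι → ZMod 2, ∏ i, sqrtBit p (z i) * sqrtBit p (z i + x i) =
      (2 * (√p * √(1 - p))) ^ hammingNorm x := by
  have h := Finset.prod_univ_sum (fun _ : ι => (univ : Finset (ZMod 2)))
    (fun i b => sqrtBit p b * sqrtBit p (b + x i))
  rw [Fintype.piFinset_univ] at h
  rw [← h]
  have hb : ∀ i, ∑ b : ZMod 2, sqrtBit p b * sqrtBit p (b + x i) =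
      if x i ≠ 0 then 2 * (√p * √(1 - p)) else 1 := by
    intro i
    have hs : ∀ f : ZMod 2 → ℝ, ∑ b, f b = f 0 + f 1 := fun f => Fin.sum_univ_two f
    have h11 : (1 : ZMod 2) + 1 = 0 := by decide
    rw [hs]
    rcases (by decide : ∀ b : ZMod 2, b = 0 ∨ b = 1) (x i) with hx | hx
    · simp [hx, sqrtBit, Real.mul_self_sqrt hp0.le,
        Real.mul_self_sqrt (show 0 ≤ 1 - p by linarith)]
    · simp [hx, sqrtBit, h11]; ring
  rw [Finset.prod_congr rfl fun i _ => hb i, Finset.prod_ite, Finset.prod_const, Finset.prod_const,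
    one_pow, mul_one]
  rfl

open scoped Classical in
/-- Union bound over the nonzero codewords, each with its Bhattacharyya bound. -/
lemma Perr_le_sum {ι : Type} [Fintype ι] (C : Submodule (ZMod 2) (ι → ZMod 2)) {p : ℝ}
    (hp0 : 0 < p) (hp1 : p < 1 / 2) :
    Perr C p ≤ ∑ x : ι → ZMod 2 with x ∈ C ∧ x ≠ 0, (2 * (√p * √(1 - p))) ^ hammingNorm x := by
  rw [← Finset.sum_congr rfl fun x _ => sum_prod_sqrt hp0 hp1 x, Finset.sum_comm]
  unfold Perr
  refine Finset.sum_le_sum fun z _ => ?_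
  have hnn : ∀ x : ι → ZMod 2, 0 ≤ ∏ i, sqrtBit p (z i) * sqrtBit p (z i + x i) := fun x =>
    Finset.prod_nonneg fun i _ => mul_nonneg (sqrtBit_nonneg _ _) (sqrtBit_nonneg _ _)
  split_ifs with h
  · obtain ⟨x, hxC, hx0, hle⟩ := h
    refine le_trans ?_ (Finset.single_le_sum (fun x _ => hnn x)
      (show x ∈ univ.filter (fun x : ι → ZMod 2 => x ∈ C ∧ x ≠ 0) by simp [hxC, hx0]))
    have e : p ^ hammingNorm z * (1 - p) ^ (Fintype.card ι - hammingNorm z) =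
        (∏ i, sqrtBit p (z i)) * ∏ i, sqrtBit p (z i) := by
      rw [prod_sqrtBit, mul_mul_mul_comm, ← mul_pow, ← mul_pow, Real.mul_self_sqrt hp0.le,
        Real.mul_self_sqrt (by linarith)]
    rw [e, Finset.prod_mul_distrib]
    exact mul_le_mul_of_nonneg_left (prod_sqrtBit_le hp1 hle)
      (Finset.prod_nonneg fun i _ => sqrtBit_nonneg _ _)
  · exact Finset.sum_nonneg fun x _ => hnn x

lemma Perr_nonneg {ι : Type} [Fintype ι] (C : Submodule (ZMod 2) (ι → ZMod 2)) {p : ℝ}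
    (hp0 : 0 < p) (hp1 : p < 1 / 2) : 0 ≤ Perr C p := by
  have : 0 ≤ 1 - p := by linarith
  unfold Perr
  refine Finset.sum_nonneg fun z _ => ?_
  split_ifs <;> positivity

/-- Grouping the union bound by weight: only weights between `minDist C` and the length occur. -/
lemma Perr_le_geom {ι : Type} [Fintype ι] (C : Submodule (ZMod 2) (ι → ZMod 2)) {p c : ℝ}
    (hp0 : 0 < p) (hp1 : p < 1 / 2) (hc : 0 ≤ c)
    (hwd : ∀ i ≤ Fintype.card ι, (weightEnum C i : ℝ) ≤ c ^ i)
    (hr : c * (2 * (√p * √(1 - p))) < 1) :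
    Perr C p ≤
      (c * (2 * (√p * √(1 - p)))) ^ minDist C / (1 - c * (2 * (√p * √(1 - p)))) := by
  classical
  refine (Perr_le_sum C hp0 hp1).trans ?_
  set ρ := 2 * (√p * √(1 - p))
  have hρ0 : 0 ≤ ρ := by positivity
  refine le_trans ?_ (geom_sum_Ico_le_of_lt_one (m := minDist C) (n := Fintype.card ι + 1)
    (by positivity) hr)
  have hmaps : ∀ x ∈ univ.filter (fun x : ι → ZMod 2 => x ∈ C ∧ x ≠ 0),
      hammingNorm x ∈ Finset.Ico (minDist C) (Fintype.card ι + 1) := by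
    intro x hx
    rw [Finset.mem_filter] at hx
    rw [Finset.mem_Ico]
    exact ⟨Nat.sInf_le ⟨x, hx.2.1, hx.2.2, rfl⟩, Nat.lt_succ_of_le hammingNorm_le_card_fintype⟩
  rw [← Finset.sum_fiberwise_of_maps_to hmaps]
  refine Finset.sum_le_sum fun i hi => ?_
  have hi' : i ≤ Fintype.card ι := by rw [Finset.mem_Ico] at hi; omega
  rw [Finset.sum_congr rfl (g := fun _ => ρ ^ i)
    (fun x hx => by rw [(Finset.mem_filter.1 hx).2]), Finset.sum_const, nsmul_eq_mul, mul_pow c ρ]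
  refine mul_le_mul_of_nonneg_right (le_trans ?_ (hwd i hi')) (by positivity)
  unfold weightEnum
  rw [Nat.card_eq_fintype_card, Fintype.card_subtype]
  norm_cast
  refine Finset.card_le_card fun x hx => ?_
  simp only [Finset.mem_filter, Finset.mem_univ, true_and] at hx ⊢
  exact ⟨hx.1.1, hx.2⟩

/-- codes with exponentially bounded weight distribution and superlogarithmic
minimal distance correct errors on BSC(p) w.h.p. when `4p(1-p) < 1/c²`. -/
theorem exp_weight_bound_BSC (c : ℝ) (hc : 1 < c)
    (n : ℕ → ℕ) (hn : StrictMono n) (hpos : ∀ k, 0 < n k)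
    (C : ∀ k, Submodule (ZMod 2) (Fin (n k) → ZMod 2))
    (hwd : ∀ k, ∀ i ≤ n k, (weightEnum (C k) i : ℝ) ≤ c ^ i)
    (hdist : Filter.Tendsto (fun k => (minDist (C k) : ℝ) / Real.log (n k))
      Filter.atTop Filter.atTop)
    (p : ℝ) (hp0 : 0 < p) (hp1 : p < 1 / 2) (hpc : 4 * p * (1 - p) < 1 / c ^ 2) :
    Filter.Tendsto (fun k => Perr (C k) p) Filter.atTop (nhds 0) := by
  have hc0 : 0 < c := by linarith
  have hr : c * (2 * (√p * √(1 - p))) < 1 := by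
    have hsq : (c * (2 * (√p * √(1 - p)))) ^ 2 = c ^ 2 * (4 * p * (1 - p)) := by
      rw [mul_pow, mul_pow, mul_pow, Real.sq_sqrt hp0.le, Real.sq_sqrt (by linarith)]
      ring
    have : c ^ 2 * (4 * p * (1 - p)) < 1 := by
      rw [lt_div_iff₀ (by positivity)] at hpc
      linarith
    rw [← hsq] at this
    exact (sq_lt_one_iff₀ (by positivity)).1 this
  have hlog : Tendsto (fun k => Real.log (n k)) atTop atTop :=
    Real.tendsto_log_atTop.comp (tendsto_natCast_atTop_atTop.comp hn.tendsto_atTop)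
  have hd : Tendsto (fun k => minDist (C k)) atTop atTop := by
    rw [← tendsto_natCast_atTop_iff (R := ℝ)]
    refine (hdist.atTop_mul_atTop₀ hlog).congr' ?_
    filter_upwards [hlog.eventually_gt_atTop 0] with k hk
    exact div_mul_cancel₀ _ hk.ne'
  have hlim : Tendsto (fun k => (c * (2 * (√p * √(1 - p)))) ^ minDist (C k) /
      (1 - c * (2 * (√p * √(1 - p))))) atTop (nhds 0) := by
    have := ((tendsto_pow_atTop_nhds_zero_of_lt_one (by positivity) hr).comp hd).div_const
      (1 - c * (2 * (√p * √(1 - p))))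
    simpa using this
  refine squeeze_zero (fun k => Perr_nonneg (C k) hp0 hp1) (fun k => ?_) hlim
  exact Perr_le_geom (C k) hp0 hp1 hc0.le (by simpa using hwd k) hr
end

section
/- Let m be a positive integer, let 0 < p < 1/2, and let Y be a binomial random variable with parameters m and p. Then Pr[Y ≥ m/2] ≤ (m+1)² · (4p(1-p))^{m/2}. -/
/-!
The bound is the Chernoff argument at the threshold `m / 2`. Put `s = √p ≤ t = √(1 - p)`. For
`j ≥ m / 2`, the product `s ^ (2 * j) * t ^ (2 * (m - j))` arises from `s ^ m * t ^ m` by replacing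
`2 * j - m` factors `t` by the smaller `s`, so
`p ^ j * (1 - p) ^ (m - j) ≤ (s * t) ^ m` (`sq_pow_mul_sq_pow_le`). The binomial coefficients sum
to `2 ^ m`, so the tail is at most `(2 * s * t) ^ m = (4 * p * (1 - p)) ^ (m / 2)`. The polynomial
factor `(m + 1) ^ 2 ≥ 1` is slack.
-/

open Finset Filter

theorem sq_pow_mul_sq_pow_le {s t : ℝ} (hs : 0 ≤ s) (hst : s ≤ t) {m j : ℕ} (hj : j ≤ m)
    (hmj : m ≤ 2 * j) : (s ^ 2) ^ j * (t ^ 2) ^ (m - j) ≤ (s * t) ^ m := by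
  have ht : 0 ≤ t := hs.trans hst
  calc (s ^ 2) ^ j * (t ^ 2) ^ (m - j)
      = s ^ m * s ^ (2 * j - m) * t ^ (2 * (m - j)) := by
        rw [← pow_mul, ← pow_mul, ← pow_add, Nat.add_sub_of_le hmj]
    _ ≤ s ^ m * t ^ (2 * j - m) * t ^ (2 * (m - j)) := by gcongr
    _ = (s * t) ^ m := by
        rw [mul_assoc, ← pow_add, mul_pow]
        congr 2
        omega

/-- binomial tail bound `Pr[Y ≥ m/2] ≤ (m+1)²(4p(1-p))^{m/2}`. -/
theorem binomial_tail_bound (m : ℕ) (hm : 0 < m) (p : ℝ) (hp0 : 0 < p) (hp1 : p < 1 / 2) :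
    (∑ j ∈ Finset.range (m + 1),
        if (m : ℝ) / 2 ≤ (j : ℝ) then (m.choose j : ℝ) * p ^ j * (1 - p) ^ (m - j) else 0)
      ≤ ((m : ℝ) + 1) ^ 2 * (4 * p * (1 - p)) ^ ((m : ℝ) / 2) := by
  have hq : 0 < 1 - p := by linarith
  have hp2 : √p ^ 2 = p := Real.sq_sqrt hp0.le
  have hq2 : √(1 - p) ^ 2 = 1 - p := Real.sq_sqrt hq.le
  have hst : √p ≤ √(1 - p) := Real.sqrt_le_sqrt (by linarith)
  have hrpow : (4 * p * (1 - p)) ^ ((m : ℝ) / 2) = 2 ^ m * (√p * √(1 - p)) ^ m := by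
    have h4 : 4 * p * (1 - p) = (2 * (√p * √(1 - p))) ^ 2 := by
      rw [mul_pow, mul_pow, hp2, hq2]; ring
    rw [h4, ← mul_pow, ← Real.rpow_natCast _ 2, ← Real.rpow_mul (by positivity),
      ← Real.rpow_natCast _ m]
    congr 1
    push_cast
    ring
  calc _ ≤ ∑ j ∈ Finset.range (m + 1), (m.choose j : ℝ) * (√p * √(1 - p)) ^ m := by
        refine Finset.sum_le_sum fun j hj => ?_
        split_ifs with h
        · have hmj : m ≤ 2 * j := by
            have : (m : ℝ) ≤ 2 * j := by linarith
            exact_mod_cast this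
          have key := sq_pow_mul_sq_pow_le (Real.sqrt_nonneg p) hst
            (Nat.lt_succ_iff.mp (Finset.mem_range.mp hj)) hmj
          rw [hp2, hq2] at key
          rw [mul_assoc]
          gcongr
        · positivity
    _ = (4 * p * (1 - p)) ^ ((m : ℝ) / 2) := by
        rw [← Finset.sum_mul, hrpow]
        congr 1
        exact_mod_cast Nat.sum_range_choose m
    _ ≤ ((m : ℝ) + 1) ^ 2 * (4 * p * (1 - p)) ^ ((m : ℝ) / 2) :=
        le_mul_of_one_le_left (by positivity) (one_le_pow₀ (by simp))
end
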